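/- arXiv:2601.15568 — 3 statements merged into one kernel-verified Lean document; each statement's English description precedes it below -/
import Mathlib

section
/- Let k ≥ 3 be an integer, set θ = 2·cos(2π/k) ∈ ℝ and F = ℚ(θ) ⊆ ℝ. Then θ is an algebraic integer and: (1) N_{F/ℚ}(2+θ) = p if k = 2pⁿ for some prime p and integer n ≥ 1, and N_{F/ℚ}(2+θ) = 1 otherwise; (2) N_{F/ℚ}(2−θ) = p if k = pⁿ for some prime p and integer n ≥ 1, and N_{F/ℚ}(2−θ) = 1 otherwise; (3) Tr_{F/ℚ}(2+θ) = 2·[F:ℚ] + μ(k) and Tr_{F/ℚ}(2−θ) = 2·[F:ℚ] − μ(k), where μ is the Möbius function. -/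
/-!
Let `ζ = e^{2πi/k}` and `L = ℚ(ζ) ⊂ ℂ`. Since `θ = ζ + ζ⁻¹`, the field `F = ℚ(θ)` embeds in `L`,
and `ζ` is a root of `P = X² - θX + 1 ∈ F[X]`. As `F ⊆ ℝ` and `|θ| < 2`, `P` has no root in `F`,
so it is the minimal polynomial of `ζ` over `F`, while the minimal polynomial over `ℚ` is the
cyclotomic polynomial `Φ_k`. For a generator `x` of a finite extension `L/K` and `a ∈ K`, the norm
of `a - x` is the value at `a` of the minimal polynomial of `x` (`norm_algebraMap_sub_gen`).
Transitivity of the norm therefore gives `N_{F/ℚ}(P(a)) = Φ_k(a)` for `a ∈ ℚ`, and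
`P(1) = 2 - θ`, `P(-1) = 2 + θ`. Transitivity of the trace gives that `Tr_{F/ℚ}(θ) = Tr_{L/ℚ}(ζ)`
is minus the subleading coefficient of `Φ_k` (`norm_quadratic_and_trace`).

It remains to know these quantities. The value `Φ_k(1)` is in Mathlib. The value `Φ_k(-1)` is `1`
for odd `k ≥ 3` (`eval_neg_one_cyclotomic_of_odd`) and `Φ_m(1)` for `k = 2m ≥ 3`
(`eval_neg_one_cyclotomic_two_mul`). Taking subleading coefficients in `X^n - 1 = ∏_{d ∣ n} Φ_d`
shows that minus the subleading coefficient of `Φ_n` is `μ(n)` (`neg_nextCoeff_cyclotomic`).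
-/

open IntermediateField

/-- `theta k = 2·cos(2π/k) = ζ_k + ζ_k⁻¹`, a generator over `ℚ` of the maximal totally
real subfield of the `k`-th cyclotomic field. -/
noncomputable def theta (k : ℕ) : ℝ := 2 * Real.cos (2 * Real.pi / k)

/-- The element `theta k` regarded as an element of the field `ℚ(theta k) ⊆ ℝ`. -/
noncomputable def genTheta (k : ℕ) : ℚ⟮theta k⟯ :=
  IntermediateField.AdjoinSimple.gen ℚ (theta k)

open Polynomial

/-- The values `Φ_d(-1)` for `d ∣ k`, `d ≠ 1`, are positive integers with product
`1 + (-1) + ⋯ + (-1)^(k-1) = 1`. -/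
lemma eval_neg_one_cyclotomic_of_odd {k : ℕ} (hk : 3 ≤ k) (ho : Odd k) :
    eval (-1 : ℤ) (cyclotomic k ℤ) = 1 := by
  have h := congrArg (eval (-1 : ℤ)) (prod_cyclotomic_eq_geom_sum (by omega : 0 < k) ℤ)
  rw [eval_prod, eval_finsetSum] at h
  simp only [eval_pow, eval_X, neg_one_geom_sum, Nat.not_even_iff_odd.mpr ho, if_false] at h
  have hd : eval (-1 : ℤ) (cyclotomic k ℤ) ∣ 1 := by
    conv_rhs => rw [← h]
    apply Finset.dvd_prod_of_mem (fun i => eval (-1 : ℤ) (cyclotomic i ℤ))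
    simp only [Finset.mem_erase, Nat.mem_divisors]
    exact ⟨by omega, dvd_rfl, by omega⟩
  exact Int.eq_one_of_dvd_one (cyclotomic_pos (by omega) _).le hd

/-- Evaluate at `-1` the identity expressing `Φ_m(X²)` through `Φ_{2m}` and, for odd `m`, `Φ_m`. -/
lemma eval_neg_one_cyclotomic_two_mul {m : ℕ} (hm : 2 ≤ m) :
    eval (-1 : ℤ) (cyclotomic (2 * m) ℤ) = eval 1 (cyclotomic m ℤ) := by
  by_cases h2 : 2 ∣ m
  · have h := congrArg (eval (-1 : ℤ)) (cyclotomic_expand_eq_cyclotomic Nat.prime_two h2 ℤ)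
    rw [expand_eval, mul_comm m] at h
    simpa using h.symm
  · have h := congrArg (eval (-1 : ℤ)) (cyclotomic_expand_eq_cyclotomic_mul Nat.prime_two h2 ℤ)
    have ho : Odd m := Nat.odd_iff.mpr (by omega)
    rw [expand_eval, eval_mul, mul_comm m,
      eval_neg_one_cyclotomic_of_odd (by rcases ho with ⟨j, rfl⟩; omega) ho] at h
    simpa using h.symm

/-- The arithmetic function `n ↦ -nextCoeff Φ_n`, i.e. the sum of the primitive `n`-th roots of
unity. Its value at `0` is `0` because `Φ_0 = 1` is constant. -/
noncomputable def sumPrimitiveRoots : ArithmeticFunction ℤ :=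
  ⟨fun n => -(cyclotomic n ℤ).nextCoeff, by simp [nextCoeff]⟩

lemma nextCoeff_X_pow_sub_one {n : ℕ} (hn : 2 ≤ n) : (X ^ n - 1 : ℤ[X]).nextCoeff = 0 := by
  have hd : (X ^ n - 1 : ℤ[X]).natDegree = n := natDegree_X_pow_sub_C (r := 1)
  rw [nextCoeff_of_natDegree_pos (by omega), hd, coeff_sub, coeff_X_pow, coeff_one]
  rw [if_neg (by omega), if_neg (by omega), sub_zero]

/-- The sum over `d ∣ n` of `-nextCoeff Φ_d` is `-nextCoeff (X^n - 1)`, which is `1` for `n = 1`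
and `0` otherwise; this characterises the Möbius function. -/
lemma neg_nextCoeff_cyclotomic (n : ℕ) :
    -(cyclotomic n ℤ).nextCoeff = ArithmeticFunction.moebius n := by
  have h : sumPrimitiveRoots * (ArithmeticFunction.zeta : ArithmeticFunction ℤ) = 1 := by
    ext m
    rw [ArithmeticFunction.coe_mul_zeta_apply]
    rcases Nat.lt_trichotomy m 1 with hm | rfl | hm
    · obtain rfl : m = 0 := by omega
      simp
    · have : (X - 1 : ℤ[X]).nextCoeff = -1 := nextCoeff_X_sub_C 1
      simp [sumPrimitiveRoots, this]
    · rw [ArithmeticFunction.one_apply_ne (by omega)]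
      change ∑ i ∈ m.divisors, -(cyclotomic i ℤ).nextCoeff = 0
      rw [Finset.sum_neg_distrib, ← Monic.nextCoeff_prod _ _ fun i _ => cyclotomic.monic i ℤ,
        prod_cyclotomic_eq_X_pow_sub_one (by omega), nextCoeff_X_pow_sub_one hm, neg_zero]
  have hmoebius : sumPrimitiveRoots = ArithmeticFunction.moebius := by
    rw [← mul_one sumPrimitiveRoots, ← ArithmeticFunction.coe_zeta_mul_moebius, ← mul_assoc, h,
      one_mul]
  exact congrArg (fun f : ArithmeticFunction ℤ => f n) hmoebius

/-- The characteristic polynomial of multiplication by a generator is its minimal polynomial, and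
its value at `a` is `det (a - x) = N(a - x)`. -/
lemma norm_algebraMap_sub_gen {K L : Type*} [Field K] [Field L] [Algebra K L]
    (pb : PowerBasis K L) (a : K) :
    Algebra.norm K (algebraMap K L a - pb.gen) = (minpoly K pb.gen).eval a := by
  rw [← charpoly_leftMulMatrix, Matrix.eval_charpoly, Algebra.norm_eq_matrix_det pb.basis, map_sub,
    AlgHom.commutes]
  rfl

/-- Let `L = ℚ(ζ)` be the `k`-th cyclotomic field and let `ζ` have minimal polynomial
`X² - tX + 1` over a subfield `F`. Transitivity in the tower `L/F/ℚ` gives the norm of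
`a² - ta + 1` and the trace of `t`. -/
lemma norm_quadratic_and_trace {k : ℕ} [NeZero k] {F L : Type*} [Field F] [CharZero F] [Field L]
    [CharZero L] [Algebra F L] [IsCyclotomicExtension {k} ℚ L] [FiniteDimensional ℚ F]
    {ζ : L} (hζ : IsPrimitiveRoot ζ k) {t : F} (ht : minpoly F ζ = X ^ 2 - C t * X + 1) :
    (∀ a : ℤ, Algebra.norm ℚ ((a : F) ^ 2 - t * a + 1) = (eval a (cyclotomic k ℤ) : ℤ)) ∧
    Algebra.trace ℚ F t = (ArithmeticFunction.moebius k : ℤ) := by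
  have : FiniteDimensional ℚ L := IsCyclotomicExtension.finiteDimensional {k} ℚ L
  have : FiniteDimensional F L := FiniteDimensional.right ℚ F L
  have htop : Algebra.adjoin ℚ {ζ} = ⊤ := IsCyclotomicExtension.adjoin_primitive_root_eq_top hζ
  have htop' : Algebra.adjoin F {ζ} = ⊤ := by
    rw [eq_top_iff]
    intro x _
    have hx : x ∈ Algebra.adjoin ℚ {ζ} := htop ▸ Algebra.mem_top
    have hle : Algebra.adjoin ℚ {ζ} ≤ (Algebra.adjoin F {ζ}).restrictScalars ℚ := by
      refine Algebra.adjoin_singleton_le ?_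
      rw [Subalgebra.mem_restrictScalars]
      exact Algebra.self_mem_adjoin_singleton F ζ
    exact (Subalgebra.mem_restrictScalars ℚ).mp (hle hx)
  let pQ : PowerBasis ℚ L := PowerBasis.ofAdjoinEqTop (Algebra.IsIntegral.isIntegral ζ) htop
  let pF : PowerBasis F L := PowerBasis.ofAdjoinEqTop (Algebra.IsIntegral.isIntegral ζ) htop'
  have gQ : pQ.gen = ζ := PowerBasis.ofAdjoinEqTop_gen _ _
  have gF : pF.gen = ζ := PowerBasis.ofAdjoinEqTop_gen _ _
  have hΦ : minpoly ℚ ζ = cyclotomic k ℚ := (cyclotomic_eq_minpoly_rat hζ (NeZero.pos k)).symm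
  constructor
  · intro a
    have h1 := norm_algebraMap_sub_gen pQ a
    have h2 := norm_algebraMap_sub_gen pF a
    rw [gQ, hΦ, ← map_cyclotomic_int, eval_intCast_map] at h1
    rw [gF, ht] at h2
    simp only [eval_add, eval_sub, eval_mul, eval_pow, eval_X, eval_C, eval_one] at h2
    rw [← h2, Algebra.norm_norm]
    simpa using h1
  · have h1 := pQ.trace_gen_eq_nextCoeff_minpoly
    have h2 := pF.trace_gen_eq_nextCoeff_minpoly
    have hn : (X ^ 2 - C t * X + 1 : F[X]).nextCoeff = -t := by
      have hd : (X ^ 2 - C t * X + 1 : F[X]).natDegree = 2 := by compute_degree!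
      rw [nextCoeff_of_natDegree_pos (by omega), hd]
      simp [coeff_one, coeff_X_pow]
    rw [gQ, hΦ, ← map_cyclotomic_int, nextCoeff_map Int.cast_injective] at h1
    rw [gF, ht, hn, neg_neg] at h2
    rw [← h2, Algebra.trace_trace, h1, ← neg_nextCoeff_cyclotomic]
    simp

lemma ofReal_theta (k : ℕ) :
    ((theta k : ℝ) : ℂ) =
      Complex.exp (2 * Real.pi * Complex.I / k) + (Complex.exp (2 * Real.pi * Complex.I / k))⁻¹ := by
  rw [theta, ← Complex.exp_neg]
  push_cast
  rw [Complex.two_cos]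
  congr 2 <;> ring

lemma theta_sq_lt_four {k : ℕ} (hk : 3 ≤ k) : theta k ^ 2 < 4 := by
  have hk' : (3 : ℝ) ≤ k := by exact_mod_cast hk
  have hs : 0 < Real.sin (2 * Real.pi / k) := by
    apply Real.sin_pos_of_pos_of_lt_pi (by positivity)
    rw [div_lt_iff₀ (by linarith)]
    nlinarith [Real.pi_pos]
  have := Real.sin_sq_add_cos_sq (2 * Real.pi / k)
  rw [theta]
  nlinarith [pow_pos hs 2]

lemma isIntegral_theta (k : ℕ) : IsIntegral ℤ (theta k) := by
  have h := Real.isIntegral_two_mul_cos_rat_mul_pi (2 / k)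
  have e : theta k = 2 * Real.cos (((2 / k : ℚ) : ℝ) * Real.pi) := by
    rw [theta]
    push_cast
    congr 2
    ring
  rw [e]
  exact h

/-- The case `F = ℚ(θ)`, `t = θ` of `norm_quadratic_and_trace`, with `L = ℚ(ζ)` inside `ℂ`. -/
lemma genTheta_norm_trace {k : ℕ} (hk : 3 ≤ k) :
    (∀ a : ℤ, Algebra.norm ℚ ((a : ℚ⟮theta k⟯) ^ 2 - genTheta k * a + 1) =
      (eval a (cyclotomic k ℤ) : ℤ)) ∧
    Algebra.trace ℚ ℚ⟮theta k⟯ (genTheta k) = (ArithmeticFunction.moebius k : ℤ) := by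
  have : NeZero k := ⟨by omega⟩
  set z : ℂ := Complex.exp (2 * Real.pi * Complex.I / k) with hz
  have hprim : IsPrimitiveRoot z k := Complex.isPrimitiveRoot_exp k (by omega)
  have hzint : IsIntegral ℚ z := (hprim.isIntegral (by omega)).tower_top
  have : FiniteDimensional ℚ ℚ⟮theta k⟯ :=
    adjoin.finiteDimensional (isIntegral_theta k).tower_top
  have : IsCyclotomicExtension {k} ℚ ℚ⟮z⟯ := by
    change IsCyclotomicExtension {k} ℚ ℚ⟮z⟯.toSubalgebra
    rw [adjoin_simple_toSubalgebra_of_isAlgebraic hzint.isAlgebraic]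
    exact hprim.adjoin_isCyclotomicExtension ℚ
  let r : ℝ →ₐ[ℚ] ℂ := Complex.ofRealAm.restrictScalars ℚ
  have hzL : z ∈ ℚ⟮z⟯ := mem_adjoin_simple_self ℚ z
  have hle : ℚ⟮theta k⟯ ≤ ℚ⟮z⟯.comap r := by
    rw [adjoin_simple_le_iff]
    change ((theta k : ℝ) : ℂ) ∈ ℚ⟮z⟯
    rw [ofReal_theta]
    exact add_mem hzL (inv_mem hzL)
  -- the inclusion of `ℚ(θ)` into `ℚ(ζ)`
  let f : ℚ⟮theta k⟯ →ₐ[ℚ] ℚ⟮z⟯ :=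
    (r.comp ℚ⟮theta k⟯.val).codRestrict ℚ⟮z⟯.toSubalgebra fun x => hle x.2
  have hf : ∀ x, ((f x : ℚ⟮z⟯) : ℂ) = (((x : ℚ⟮theta k⟯) : ℝ) : ℂ) := fun _ => rfl
  let : Algebra ℚ⟮theta k⟯ ℚ⟮z⟯ := f.toRingHom.toAlgebra
  have hgen : ((genTheta k : ℚ⟮theta k⟯) : ℝ) = theta k := AdjoinSimple.coe_gen ℚ (theta k)
  let ζ : ℚ⟮z⟯ := ⟨z, hzL⟩
  have hζ : IsPrimitiveRoot ζ k :=
    IsPrimitiveRoot.of_map_of_injective (f := ℚ⟮z⟯.val) hprim ℚ⟮z⟯.val.injective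
  refine norm_quadratic_and_trace hζ (t := genTheta k) ?_
  have hdeg : (X ^ 2 - C (genTheta k) * X + 1 : ℚ⟮theta k⟯[X]).natDegree = 2 := by compute_degree!
  have hmon : (X ^ 2 - C (genTheta k) * X + 1 : ℚ⟮theta k⟯[X]).Monic := by monicity!
  refine (minpoly.eq_of_irreducible_of_monic ?_ ?_ hmon).symm
  · rw [hmon.irreducible_iff_roots_eq_zero_of_degree_le_three hdeg.ge (by omega)]
    rw [Multiset.eq_zero_iff_forall_notMem]
    intro x hx
    have hx' := (mem_roots'.mp hx).2
    simp only [IsRoot.def, eval_add, eval_sub, eval_mul, eval_pow, eval_X, eval_C, eval_one] at hx'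
    have hx2 := congrArg (fun y : ℚ⟮theta k⟯ => (y : ℝ)) hx'
    push_cast [hgen] at hx2
    -- the discriminant `θ² - 4` is negative
    nlinarith [theta_sq_lt_four hk, sq_nonneg (2 * (x : ℝ) - theta k)]
  · apply Subtype.ext
    have hz0 : z ≠ 0 := Complex.exp_ne_zero _
    have ha : (algebraMap ℚ⟮theta k⟯ ℚ⟮z⟯ (genTheta k) : ℂ) = z + z⁻¹ := by
      change ((f (genTheta k) : ℚ⟮z⟯) : ℂ) = _
      rw [hf, hgen, ofReal_theta]
    simp only [map_add, map_sub, map_mul, map_pow, aeval_X, aeval_C, map_one]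
    push_cast
    rw [ha]
    change z ^ 2 - (z + z⁻¹) * z + 1 = 0
    field_simp
    ring

/-- Norms and traces of `2 ± (ζ_k + ζ_k⁻¹)` in `F = ℚ(ζ_k + ζ_k⁻¹)`:
`θ = 2·cos(2π/k)` is an algebraic integer; `N(2+θ) = p` if `k = 2pⁿ` and `1` otherwise;
`N(2−θ) = p` if `k = pⁿ` and `1` otherwise; `Tr(2±θ) = 2·[F:ℚ] ± μ(k)`. -/
theorem norm_trace_two_add_sub_theta (k : ℕ) (hk : 3 ≤ k) :
    IsIntegral ℤ (theta k) ∧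
    (∀ p n : ℕ, p.Prime → 1 ≤ n → k = 2 * p ^ n →
      Algebra.norm ℚ (2 + genTheta k) = (p : ℚ)) ∧
    ((¬ ∃ p n : ℕ, p.Prime ∧ 1 ≤ n ∧ k = 2 * p ^ n) →
      Algebra.norm ℚ (2 + genTheta k) = 1) ∧
    (∀ p n : ℕ, p.Prime → 1 ≤ n → k = p ^ n →
      Algebra.norm ℚ (2 - genTheta k) = (p : ℚ)) ∧
    ((¬ ∃ p n : ℕ, p.Prime ∧ 1 ≤ n ∧ k = p ^ n) →
      Algebra.norm ℚ (2 - genTheta k) = 1) ∧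
    Algebra.trace ℚ ℚ⟮theta k⟯ (2 + genTheta k) =
      2 * (Module.finrank ℚ ℚ⟮theta k⟯ : ℚ) + (ArithmeticFunction.moebius k : ℚ) ∧
    Algebra.trace ℚ ℚ⟮theta k⟯ (2 - genTheta k) =
      2 * (Module.finrank ℚ ℚ⟮theta k⟯ : ℚ) - (ArithmeticFunction.moebius k : ℚ) := by
  obtain ⟨hN, hT⟩ := genTheta_norm_trace hk
  have hfin : FiniteDimensional ℚ ℚ⟮theta k⟯ :=
    adjoin.finiteDimensional (isIntegral_theta k).tower_top
  have hplus : Algebra.norm ℚ (2 + genTheta k) = (eval (-1) (cyclotomic k ℤ) : ℤ) := by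
    rw [← hN (-1)]
    congr 1
    push_cast
    ring
  have hminus : Algebra.norm ℚ (2 - genTheta k) = (eval 1 (cyclotomic k ℤ) : ℤ) := by
    rw [← hN 1]
    congr 1
    push_cast
    ring
  have hT2 : Algebra.trace ℚ ℚ⟮theta k⟯ 2 = 2 * (Module.finrank ℚ ℚ⟮theta k⟯ : ℚ) := by
    have := Algebra.trace_algebraMap (S := ℚ⟮theta k⟯) (2 : ℚ)
    rw [map_ofNat] at this
    rw [this, nsmul_eq_mul, mul_comm]
  refine ⟨isIntegral_theta k, ?_, ?_, ?_, ?_, ?_, ?_⟩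
  · rintro p n hp hn rfl
    have : Fact p.Prime := ⟨hp⟩
    obtain ⟨n, rfl⟩ : ∃ m, n = m + 1 := ⟨n - 1, by omega⟩
    rw [hplus, eval_neg_one_cyclotomic_two_mul (by omega), eval_one_cyclotomic_prime_pow]
    simp
  · intro h
    rw [hplus]
    rcases Nat.even_or_odd' k with ⟨m, rfl | rfl⟩
    · rw [eval_neg_one_cyclotomic_two_mul (by omega), eval_one_cyclotomic_not_prime_pow,
        Int.cast_one]
      intro p hp n hpn
      refine h ⟨p, n, hp, Nat.one_le_iff_ne_zero.mpr ?_, by rw [hpn]⟩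
      rintro rfl
      rw [pow_zero] at hpn
      omega
    · rw [eval_neg_one_cyclotomic_of_odd hk ⟨m, rfl⟩, Int.cast_one]
  · rintro p n hp hn rfl
    have : Fact p.Prime := ⟨hp⟩
    obtain ⟨n, rfl⟩ : ∃ m, n = m + 1 := ⟨n - 1, by omega⟩
    rw [hminus, eval_one_cyclotomic_prime_pow]
    simp
  · intro h
    rw [hminus, eval_one_cyclotomic_not_prime_pow, Int.cast_one]
    intro p hp n hpn
    refine h ⟨p, n, hp, Nat.one_le_iff_ne_zero.mpr ?_, hpn.symm⟩
    rintro rfl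
    rw [pow_zero] at hpn
    omega
  · rw [map_add, hT, hT2]
  · rw [map_sub, hT, hT2]
end

section
/- Let k ≥ 3 be an integer such that the field F = ℚ(2·cos(2π/k)) ⊆ ℝ has degree [F:ℚ] > 2. Then α = 2 + 2·cos(2π/k) and β = 2 − 2·cos(2π/k) are totally positive algebraic integers of F, and both α and β are indecomposable in O_F. -/
/-!
Write `2 - θ = 2 - (ζ + ζ⁻¹) = (ζ - 1)(ζ⁻¹ - 1)` and `2 + θ = 2 - (w + w⁻¹)` with `w = -ζ`, which
is again a root of unity. Both cases thus concern `2 - g` with `g = z + z⁻¹` generating `F`, where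
`z` is a primitive `n`-th root of unity, and everything is computed in `K = ℚ(z)`.

Every complex embedding of `K` sends `z` to a number of modulus one, so it maps `F` into `ℝ` and
sends `2 - g` to `|z' - 1|² > 0`. If `2 - g = x + y` with `x, y` totally positive integers, then
at every embedding `(x + y)² ≥ 4xy`. Since `N(x), N(y) ≥ 1`, multiplying over the `φ(n)` embeddings
of `K` gives `N(2 - g)² ≥ 4 ^ φ(n)`. On the other hand `N(2 - g) = Φ_n(1)²`, hence
`Φ_n(1)² ≥ 2 ^ φ(n)`. Now `F` is real and `K` is not, so `φ(n) ≥ 2 [F : ℚ] ≥ 6`; as `Φ_n(1)` is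
`1` or a prime at most `φ(n) + 1`, this is impossible (`eval_one_cyclotomic_sq_lt`). The argument
is `indecomposable_core`; `indecomposable_two_sub` transfers it to subfields of `ℝ`.
-/

open IntermediateField

/-- An element of a field is totally positive if it is positive in every
real embedding. -/
def TotallyPositive (F : Type*) [Field F] (α : F) : Prop :=
  ∀ σ : F →+* ℝ, 0 < σ α

/-- A totally positive algebraic integer of `F` is indecomposable if it is not a sum of
two totally positive algebraic integers of `F`. -/
def IndecomposableIn (F : Type*) [Field F] (α : F) : Prop :=
  ¬ ∃ x y : F, IsIntegral ℤ x ∧ IsIntegral ℤ y ∧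
    TotallyPositive F x ∧ TotallyPositive F y ∧ α = x + y

lemma sq_lt_two_pow {m : ℕ} (hm : 6 ≤ m) : (m + 1) ^ 2 < 2 ^ m := by
  induction m, hm using Nat.le_induction with
  | base => norm_num
  | succ m hm ih => rw [pow_succ 2 m]; nlinarith

/-- For `n > 1`, `Φ_n(1)` is `p` if `n` is a power of the prime `p` and `1` otherwise, and
`p ≤ φ(n) + 1` in
the first case. The bound fails for `n = 5`, where `Φ_5(1) = 5` and `2 ^ φ(5) = 16`; this is where
the degree assumption enters. -/
lemma eval_one_cyclotomic_sq_lt {n : ℕ} (hn : 6 ≤ n.totient) :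
    ((Polynomial.cyclotomic n ℤ).eval 1) ^ 2 < 2 ^ n.totient := by
  by_cases h : ∃ p m : ℕ, p.Prime ∧ 0 < m ∧ p ^ m = n
  · obtain ⟨p, m, hp, hm, rfl⟩ := h
    obtain ⟨j, rfl⟩ : ∃ j, m = j + 1 := ⟨m - 1, by omega⟩
    have : Fact p.Prime := ⟨hp⟩
    rw [Polynomial.eval_one_cyclotomic_prime_pow]
    have h1 : p ≤ (p ^ (j + 1)).totient + 1 := by
      rw [Nat.totient_prime_pow hp (by omega)]
      have : 0 < p ^ (j + 1 - 1) := pow_pos hp.pos _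
      have := Nat.le_mul_of_pos_left (p - 1) this
      omega
    have h2 := sq_lt_two_pow hn
    have h3 : p ^ 2 ≤ ((p ^ (j + 1)).totient + 1) ^ 2 := Nat.pow_le_pow_left h1 2
    exact_mod_cast h3.trans_lt h2
  · rw [Polynomial.eval_one_cyclotomic_not_prime_pow]
    · simpa using one_lt_pow₀ (by norm_num : (1 : ℤ) < 2) (by omega : n.totient ≠ 0)
    · intro p hp m hpm
      refine h ⟨p, m, hp, Nat.pos_of_ne_zero ?_, hpm⟩
      rintro rfl
      simp at hpm
      subst hpm
      simp at hn

/-- The argument for an abstract field `F` generated by `g = z + z⁻¹` inside a cyclotomic field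
`K = ℚ(z)`. The hypothesis `hgen` expresses that `g` generates `F` over `ℚ`, and `r` is a real
embedding of `F`, whose existence forces `F ≠ K`. -/
lemma indecomposable_core {F K : Type*} [Field F] [Field K] [NumberField F] [NumberField K]
    [Algebra F K] {n : ℕ} [NeZero n] [IsCyclotomicExtension {n} ℚ K] {z : K}
    (hz : IsPrimitiveRoot z n) (g : F) (hg : algebraMap F K g = z + z⁻¹)
    (hgen : ∀ φ ψ : F →+* ℂ, φ g = ψ g → φ = ψ) (r : F →+* ℝ)
    (hdeg : 2 < Module.finrank ℚ F) :
    IsIntegral ℤ (2 - g) ∧ TotallyPositive F (2 - g) ∧ IndecomposableIn F (2 - g) := by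
  have hirr := Polynomial.cyclotomic.irreducible_rat (NeZero.pos n)
  have hK : Module.finrank ℚ K = n.totient := IsCyclotomicExtension.finrank K hirr
  have htower : Module.finrank ℚ F * Module.finrank F K = n.totient := by
    rw [Module.finrank_mul_finrank, hK]
  have hFK : 0 < Module.finrank F K := Module.finrank_pos
  have hn2 : 2 < n := by
    have h1 := Nat.totient_le n
    nlinarith
  -- `K` has no real embedding, whereas `F` has one, so `F ≠ K`.
  have hFK1 : Module.finrank F K ≠ 1 := by
    intro h1
    obtain ⟨c, hc⟩ := (bijective_algebraMap_of_linearEquiv (LinearEquiv.ofFinrankEq F K (by simp [h1]))).surjective z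
    have hc' : IsPrimitiveRoot (r c) n :=
      (IsPrimitiveRoot.of_map_of_injective (hc ▸ hz) (algebraMap F K).injective).map_of_injective
        r.injective
    have h2 : |r c| = 1 := by
      rw [← pow_eq_one_iff_of_nonneg (abs_nonneg _) (NeZero.ne n), ← abs_pow, hc'.pow_eq_one,
        abs_one]
    have h3 : (r c) ^ 2 = 1 := by rw [← sq_abs, h2, one_pow]
    exact absurd (Nat.le_of_dvd two_pos (hc'.dvd_of_pow_eq_one _ h3)) (by omega)
  have hφ : 6 ≤ n.totient := by nlinarith [show 2 ≤ Module.finrank F K by omega]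
  have hz0 : z ≠ 0 := hz.ne_zero (NeZero.ne n)
  have hτz (τ : K →+* ℂ) : (τ z)⁻¹ = (starRingEnd ℂ) (τ z) :=
    Complex.inv_eq_conj ((hz.map_of_injective τ.injective).norm'_eq_one (NeZero.ne n))
  have hτg (τ : K →+* ℂ) : τ (algebraMap F K g) = τ z + (starRingEnd ℂ) (τ z) := by
    rw [hg, map_add, map_inv₀, hτz]
  -- `F` is totally real.
  have hreal (τ : K →+* ℂ) : ∃ σ : F →+* ℝ, ∀ x, τ (algebraMap F K x) = σ x := by
    have h : NumberField.ComplexEmbedding.IsReal (τ.comp (algebraMap F K)) := by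
      apply hgen
      simp only [NumberField.ComplexEmbedding.conjugate_coe_eq, RingHom.comp_apply, hτg, map_add,
        Complex.conj_conj]
      ring
    exact ⟨h.embedding, fun x ↦ (h.coe_embedding_apply x).symm⟩
  have hfact : algebraMap F K (2 - g) = (z - 1) * (z⁻¹ - 1) := by
    rw [map_sub, hg, map_ofNat]
    field_simp
    ring
  have hnorm : Algebra.norm ℚ (algebraMap F K (2 - g)) =
      (((Polynomial.cyclotomic n ℤ).eval 1 : ℤ) : ℚ) ^ 2 := by
    rw [hfact, map_mul, hz.sub_one_norm_eq_eval_cyclotomic hn2 hirr,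
      hz.inv.sub_one_norm_eq_eval_cyclotomic hn2 hirr, sq]
  choose s hs using hreal
  have hprod (x : F) : ((Algebra.norm ℚ (algebraMap F K x) : ℚ) : ℝ) =
      ∏ τ : K →ₐ[ℚ] ℂ, s τ.toRingHom x := by
    have h := Algebra.norm_eq_prod_embeddings ℚ ℂ (algebraMap F K x)
    have h2 : ∀ τ : K →ₐ[ℚ] ℂ, τ (algebraMap F K x) = (s τ.toRingHom x : ℂ) :=
      fun τ ↦ hs τ.toRingHom x
    simp only [h2] at h
    rw [← Complex.ofReal_prod] at h
    have h3 : (((Algebra.norm ℚ (algebraMap F K x) : ℚ) : ℝ) : ℂ) =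
      ((∏ τ : K →ₐ[ℚ] ℂ, s τ.toRingHom x : ℝ) : ℂ) := by rw [← h]; simp
    exact_mod_cast h3
  -- The norm of a totally positive algebraic integer is a positive rational integer.
  have hone (x : F) (hx : IsIntegral ℤ x) (hpos : TotallyPositive F x) :
      1 ≤ ∏ τ : K →ₐ[ℚ] ℂ, s τ.toRingHom x := by
    have hp : 0 < ∏ τ : K →ₐ[ℚ] ℂ, s τ.toRingHom x := Finset.prod_pos fun τ _ ↦ hpos _
    obtain ⟨m, hm⟩ := IsIntegrallyClosed.isIntegral_iff.mp
      (Algebra.isIntegral_norm ℚ (hx.map (Algebra.ofId F K |>.restrictScalars ℤ)))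
    have hm' : Algebra.norm ℚ (algebraMap F K x) = (m : ℚ) := by simpa using hm.symm
    rw [← hprod, hm'] at hp ⊢
    norm_cast at hp ⊢
  refine ⟨?_, ?_, ?_⟩
  · have hzi : IsIntegral ℤ z := hz.isIntegral (NeZero.pos n)
    have hzi' : IsIntegral ℤ z⁻¹ := hz.inv.isIntegral (NeZero.pos n)
    have : IsIntegral ℤ (algebraMap F K (2 - g)) := by
      rw [hfact]
      exact (hzi.sub isIntegral_one).mul (hzi'.sub isIntegral_one)
    exact (isIntegral_algebraMap_iff (algebraMap F K).injective).mp this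
  · intro σ
    -- Extending `σ` to a complex embedding `τ` of `K` gives `σ (2 - g) = |τ z - 1|²`.
    set τ := NumberField.ComplexEmbedding.lift K (Complex.ofRealHom.comp σ) with hτ
    have h1 : τ (algebraMap F K (2 - g)) = ((σ (2 - g) : ℝ) : ℂ) := by simp [hτ]
    have h2 : τ (algebraMap F K (2 - g)) = ((Complex.normSq (τ z - 1) : ℝ) : ℂ) := by
      rw [hfact, map_mul, map_sub, map_sub, map_inv₀, hτz, ← Complex.mul_conj]
      simp
    have h3 : σ (2 - g) = Complex.normSq (τ z - 1) := by exact_mod_cast h1.symm.trans h2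
    rw [h3, Complex.normSq_pos, sub_ne_zero]
    intro h4
    exact hz.ne_one (by omega) (τ.injective (by rw [h4, map_one]))
  · rintro ⟨x, y, hx, hy, hxp, hyp, hxy⟩
    have h1 := hone x hx hxp
    have h2 := hone y hy hyp
    have h3 := hprod (2 - g)
    have hcard : Fintype.card (K →ₐ[ℚ] ℂ) = n.totient := by rw [AlgHom.card, hK]
    -- Squaring avoids the square roots in `a + b ≥ 2 √(a b)`.
    have h4 : (4 : ℝ) ^ n.totient ≤ (∏ τ : K →ₐ[ℚ] ℂ, s τ.toRingHom (2 - g)) ^ 2 := by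
      calc (4 : ℝ) ^ n.totient
          ≤ 4 ^ n.totient * ((∏ τ : K →ₐ[ℚ] ℂ, s τ.toRingHom x) *
              ∏ τ : K →ₐ[ℚ] ℂ, s τ.toRingHom y) :=
            le_mul_of_one_le_right (by positivity) (one_le_mul_of_one_le_of_one_le h1 h2)
        _ = ∏ τ : K →ₐ[ℚ] ℂ, 4 * (s τ.toRingHom x * s τ.toRingHom y) := by
            rw [Finset.prod_mul_distrib, Finset.prod_mul_distrib, Finset.prod_const,
              Finset.card_univ, hcard]
        _ ≤ ∏ τ : K →ₐ[ℚ] ℂ, (s τ.toRingHom (2 - g)) ^ 2 := by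
            refine Finset.prod_le_prod (fun τ _ ↦ ?_) (fun τ _ ↦ ?_)
            · have := hxp (s τ.toRingHom)
              have := hyp (s τ.toRingHom)
              positivity
            · rw [hxy, map_add]
              nlinarith [sq_nonneg (s τ.toRingHom x - s τ.toRingHom y)]
        _ = _ := Finset.prod_pow _ _ _
    rw [← h3, hnorm] at h4
    have h5 := eval_one_cyclotomic_sq_lt hφ
    set c := (Polynomial.cyclotomic n ℤ).eval 1
    have h6 : (4 : ℤ) ^ n.totient ≤ (c ^ 2) ^ 2 := by exact_mod_cast h4
    have h7 : (c ^ 2) ^ 2 < (2 ^ n.totient) ^ 2 := pow_lt_pow_left₀ h5 (sq_nonneg c) two_ne_zero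
    have h8 : ((2 : ℤ) ^ n.totient) ^ 2 = 4 ^ n.totient := by
      rw [← pow_mul, mul_comm, pow_mul]
      norm_num
    omega

/-- The concrete form of the core used for both signs: `g = ±t` generates `ℚ(t) ⊆ ℝ` and equals
`w + w⁻¹` for a root of unity `w`, so that `ℚ(t)` embeds into the cyclotomic field `ℚ(w) ⊆ ℂ`. -/
lemma indecomposable_two_sub (t : ℝ) (g : ℚ⟮t⟯) (hgt : g = AdjoinSimple.gen ℚ t ∨
    g = - AdjoinSimple.gen ℚ t) {k : ℕ} (hk : 0 < k) (w : ℂ) (hw : w ^ k = 1)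
    (hg : (((g : ℝ)) : ℂ) = w + w⁻¹) (hdeg : 2 < Module.finrank ℚ ℚ⟮t⟯) :
    IsIntegral ℤ (2 - g) ∧ TotallyPositive ℚ⟮t⟯ (2 - g) ∧ IndecomposableIn ℚ⟮t⟯ (2 - g) := by
  have : FiniteDimensional ℚ ℚ⟮t⟯ := Module.finite_of_finrank_pos (by omega)
  have : NumberField ℚ⟮t⟯ := ⟨⟩
  have hw' := IsPrimitiveRoot.orderOf w
  set n := orderOf w with hn
  have hn0 : 0 < n := orderOf_pos_iff.mpr (isOfFinOrder_iff_pow_eq_one.mpr ⟨k, hk, hw⟩)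
  have : NeZero n := ⟨hn0.ne'⟩
  have : IsCyclotomicExtension {n} ℚ ℚ⟮w⟯ :=
    (IntermediateField.isCyclotomicExtension_singleton_iff_eq_adjoin n ℚ ℂ ℚ⟮w⟯ hw').mpr rfl
  have : NumberField ℚ⟮w⟯ := IsCyclotomicExtension.numberField {n} ℚ _
  have hz : IsPrimitiveRoot (AdjoinSimple.gen ℚ w) n := IsPrimitiveRoot.coe_submonoidClass_iff.mp hw'
  let ι : ℝ →ₐ[ℚ] ℂ := Complex.ofRealAm.restrictScalars ℚ
  have hle : ℚ⟮t⟯ ≤ ℚ⟮w⟯.comap ι := by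
    rw [IntermediateField.adjoin_simple_le_iff]
    have hwm := mem_adjoin_simple_self ℚ w
    have hgm : ((g : ℝ) : ℂ) ∈ ℚ⟮w⟯ := hg ▸ add_mem hwm (inv_mem hwm)
    change ((t : ℝ) : ℂ) ∈ ℚ⟮w⟯
    rcases hgt with h | h
    · simpa [h] using hgm
    · simpa [h] using hgm
  let f : ℚ⟮t⟯ →+* ℚ⟮w⟯ := ((ι.comp ℚ⟮t⟯.val).toRingHom).codRestrict ℚ⟮w⟯ (fun x ↦ hle x.2)
  let : Algebra ℚ⟮t⟯ ℚ⟮w⟯ := f.toAlgebra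
  refine indecomposable_core hz g (Subtype.ext ?_) ?_ ℚ⟮t⟯.val.toRingHom hdeg
  · exact hg
  · intro φ ψ h
    have h' : φ (AdjoinSimple.gen ℚ t) = ψ (AdjoinSimple.gen ℚ t) := by
      rcases hgt with h1 | h1 <;> simpa [h1] using h
    have : φ.toRatAlgHom = ψ.toRatAlgHom := by
      apply IntermediateField.adjoin_algHom_ext
      rintro x rfl
      exact h'
    ext x
    exact DFunLike.congr_fun this x

/-- For `k ≥ 3` with `[ℚ(ζ_k+ζ_k⁻¹):ℚ] > 2`, the elements `2 ± (ζ_k + ζ_k⁻¹)` are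
totally positive algebraic integers and are indecomposable in `ℚ(ζ_k+ζ_k⁻¹)`. -/
theorem two_add_sub_theta_indecomposable (k : ℕ) (hk : 3 ≤ k)
    (hdeg : 2 < Module.finrank ℚ ℚ⟮theta k⟯) :
    (IsIntegral ℤ (2 + genTheta k) ∧ TotallyPositive ℚ⟮theta k⟯ (2 + genTheta k) ∧
      IndecomposableIn ℚ⟮theta k⟯ (2 + genTheta k)) ∧
    (IsIntegral ℤ (2 - genTheta k) ∧ TotallyPositive ℚ⟮theta k⟯ (2 - genTheta k) ∧
      IndecomposableIn ℚ⟮theta k⟯ (2 - genTheta k)) := by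
  have hk0 : (k : ℂ) ≠ 0 := by exact_mod_cast (by omega : k ≠ 0)
  set w : ℂ := Complex.exp (2 * Real.pi * Complex.I / k) with hw
  have hwk : w ^ k = 1 := (Complex.isPrimitiveRoot_exp k (by omega)).pow_eq_one
  have hθ : ((theta k : ℝ) : ℂ) = w + w⁻¹ := by
    rw [hw, ← Complex.exp_neg, theta]
    push_cast
    rw [Complex.two_cos]
    congr 2 <;> ring
  have h2 : 0 < 2 * k := by omega
  constructor
  · rw [← sub_neg_eq_add]
    refine indecomposable_two_sub (theta k) (-genTheta k) (Or.inr rfl) h2 (-w) ?_ ?_ hdeg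
    · rw [pow_mul, neg_sq, ← pow_mul, mul_comm, pow_mul, hwk, one_pow]
    · have : ((-genTheta k : ℚ⟮theta k⟯) : ℝ) = -theta k := rfl
      rw [this, Complex.ofReal_neg, hθ, inv_neg]
      ring
  · refine indecomposable_two_sub (theta k) (genTheta k) (Or.inl rfl) h2 w ?_ hθ hdeg
    rw [mul_comm, pow_mul, hwk, one_pow]
end

section
/- Let K be a totally real number field of degree 4 over ℚ and let β ∈ O_K be such that K = ℚ(β). Then disc(K) ≤ (2¹²/5⁵)·⌈β⌉¹², where ⌈β⌉ = max_{σ} |σ(β)|, the maximum taken over the four embeddings σ : K → ℝ, and disc(K) is the discriminant of the number field K. -/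
open NumberField

/-!
The four conjugates `x₀, …, x₃` of `β` are real and lie in `[-R, R]`, where `R = ⌈β⌉`. Expressing
`1, β, β², β³` in an integral basis gives `det V(x)² = m² · disc K` with `m` an integer, where
`V(x)` is the Vandermonde matrix. The conjugates are distinct because `β` generates `K`, so `m ≠ 0`
and `disc K ≤ det V(x)²`.

It remains to solve Fekete's problem for four points: `det V(x)² ≤ 2¹²/5⁵` for `x` in `[-1, 1]⁴`,
the general case following by homogeneity. The extremal points are `±1, ±1/√5`. By an observation
of Fejér, the Lagrange polynomials `ℓⱼ` at these nodes satisfy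
`∑ ℓⱼ(t)² = 1 - (3/16) (1 - t²) (5t² - 1)² ≤ 1` on `[-1, 1]`. The matrix `L = (ℓⱼ(xᵢ))` has
determinant `det V(x) / det V(±1, ±1/√5)`, and the positive semidefinite matrix `L Lᵀ` has all
diagonal entries at most `1`, so its determinant is at most `1` by AM-GM on its eigenvalues.
To keep all coefficients rational, `L Lᵀ` is written as `A D Aᵀ` with `D` diagonal, where the
columns of `A` are, up to scalars, the sums and differences of the `ℓⱼ` at opposite nodes.
-/

/-! ### Fekete's extremal problem for four points -/

/-- AM-GM for the eigenvalues of a positive semidefinite matrix, in the form of a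
Hadamard-type bound. -/
lemma det_le_one_of_diag_le_one (G : Matrix (Fin 4) (Fin 4) ℝ) (hG : G.PosSemidef)
    (hd : ∀ i, G i i ≤ 1) : G.det ≤ 1 := by
  have h1 := hG.isHermitian.det_eq_prod_eigenvalues
  have h2 := hG.isHermitian.trace_eq_sum_eigenvalues
  have h3 := hG.eigenvalues_nonneg
  set e := hG.isHermitian.eigenvalues
  simp only [Matrix.trace, Matrix.diag_apply, Fin.sum_univ_four, Fin.prod_univ_four,
    RCLike.ofReal_real_eq_id, id_eq] at h1 h2
  rw [h1]
  have hs : e 0 + e 1 + e 2 + e 3 ≤ 4 := by linarith [hd 0, hd 1, hd 2, hd 3]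
  have a1 : e 0 * e 1 ≤ ((e 0 + e 1) / 2) ^ 2 := by nlinarith [sq_nonneg (e 0 - e 1)]
  have a2 : e 2 * e 3 ≤ ((e 2 + e 3) / 2) ^ 2 := by nlinarith [sq_nonneg (e 2 - e 3)]
  have h01 := add_nonneg (h3 0) (h3 1)
  have h23 := add_nonneg (h3 2) (h3 3)
  have a3 : (e 0 + e 1) / 2 * ((e 2 + e 3) / 2) ≤ 1 := by
    nlinarith [sq_nonneg (e 0 + e 1 - (e 2 + e 3))]
  calc e 0 * e 1 * e 2 * e 3 = (e 0 * e 1) * (e 2 * e 3) := by ring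
    _ ≤ ((e 0 + e 1) / 2) ^ 2 * ((e 2 + e 3) / 2) ^ 2 :=
        mul_le_mul a1 a2 (mul_nonneg (h3 2) (h3 3)) (sq_nonneg _)
    _ = ((e 0 + e 1) / 2 * ((e 2 + e 3) / 2)) ^ 2 := by ring
    _ ≤ 1 := pow_le_one₀ (by positivity) a3

lemma vandermonde_sq_le_of_abs_le_one (x : Fin 4 → ℝ) (hx : ∀ i, |x i| ≤ 1) :
    (Matrix.vandermonde x).det ^ 2 ≤ 2 ^ 12 / 5 ^ 5 := by
  -- Columns: multiples of `ℓ₁ + ℓ₋₁`, `ℓ₁ - ℓ₋₁`, `ℓₐ + ℓ₋ₐ`, `ℓₐ - ℓ₋ₐ`, where `a = 1/√5`.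
  let A : Matrix (Fin 4) (Fin 4) ℝ := Matrix.of fun i =>
    ![5 * x i ^ 2 - 1, x i * (5 * x i ^ 2 - 1), 1 - x i ^ 2, x i * (1 - x i ^ 2)]
  -- The coefficients of the columns of `A` on `1, t, t², t³`.
  let M : Matrix (Fin 4) (Fin 4) ℝ :=
    !![-1, 0, 1, 0; 0, -1, 0, 1; 5, 0, -1, 0; 0, 5, 0, -1]
  -- The weights for which `∑ dⱼ fⱼ² = ∑ ℓⱼ²`, where `fⱼ` are the polynomials in the columns of `A`.
  let d : Fin 4 → ℝ := ![1 / 32, 1 / 32, 25 / 32, 125 / 32]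
  have hA : A = Matrix.vandermonde x * M := by
    ext i j
    fin_cases j <;>
      simp [A, M, Matrix.mul_apply, Fin.sum_univ_four, Matrix.vandermonde_apply] <;> ring
  have hM : M.det ^ 2 = 256 := by
    simp [M, Matrix.det_succ_row_zero, Fin.sum_univ_succ, Fin.succAbove]
    norm_num
  have hd : ∀ j, 0 ≤ d j := by
    intro j
    fin_cases j <;> norm_num [d]
  have hP : (A * Matrix.diagonal d * A.conjTranspose).PosSemidef :=
    (Matrix.PosSemidef.diagonal hd).mul_mul_conjTranspose_same A
  have hle := det_le_one_of_diag_le_one _ hP (by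
    intro i
    have h1 : x i ^ 2 ≤ 1 := (sq_le_one_iff_abs_le_one _).2 (hx i)
    have h2 : (A * Matrix.diagonal d * A.conjTranspose) i i
        = 1 - 3 / 16 * ((1 - x i ^ 2) * (5 * x i ^ 2 - 1) ^ 2) := by
      simp [Matrix.mul_apply, Fin.sum_univ_four, A, d, Matrix.diagonal_apply]
      ring
    rw [h2]
    have := mul_nonneg (sub_nonneg.2 h1) (sq_nonneg (5 * x i ^ 2 - 1))
    linarith)
  have hdd : (Matrix.diagonal d).det = 3125 / 2 ^ 20 := by
    simp [Matrix.det_diagonal, Fin.prod_univ_four, d]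
    norm_num
  have hdet : (A * Matrix.diagonal d * A.conjTranspose).det
      = (Matrix.vandermonde x).det ^ 2 * (M.det ^ 2 * (Matrix.diagonal d).det) := by
    rw [Matrix.det_mul, Matrix.det_mul, Matrix.det_conjTranspose, hA, Matrix.det_mul, star_trivial]
    ring
  rw [hdet, hM, hdd] at hle
  linarith

lemma vandermonde_sq_le (x : Fin 4 → ℝ) (R : ℝ) (hx : ∀ i, |x i| ≤ R) :
    (Matrix.vandermonde x).det ^ 2 ≤ 2 ^ 12 / 5 ^ 5 * R ^ 12 := by
  have hR : 0 ≤ R := (abs_nonneg _).trans (hx 0)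
  -- For `R = 0` every `x i` vanishes, and `x i / R = 0` still gives a valid rescaling.
  have hxy : ∀ i, x i = R * (x i / R) := by
    intro i
    rcases eq_or_ne R 0 with h | h
    · have := hx i
      rw [h] at this
      simp [abs_nonpos_iff.1 this]
    · field_simp
  have hV : Matrix.vandermonde x
      = Matrix.vandermonde (fun i => x i / R) * Matrix.diagonal (fun j : Fin 4 => R ^ (j : ℕ)) := by
    ext i j
    rw [Matrix.mul_diagonal, Matrix.vandermonde_apply, Matrix.vandermonde_apply, ← mul_pow,
      mul_comm, ← hxy]
  have hb := vandermonde_sq_le_of_abs_le_one (fun i => x i / R) (by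
    intro i
    rw [abs_div, abs_of_nonneg hR]
    exact div_le_one_of_le₀ (hx i) hR)
  have hD : (Matrix.diagonal (fun j : Fin 4 => R ^ (j : ℕ))).det = R ^ 6 := by
    simp [Matrix.det_diagonal, Fin.prod_univ_four]
    ring
  rw [hV, Matrix.det_mul, hD, mul_pow, ← pow_mul]
  exact mul_le_mul_of_nonneg_right hb (by positivity)

/-! ### The discriminant of the order generated by `β` -/

/-- The family `bⱼ` of integers of `K` has discriminant `m² · disc K`, where `m` is the determinant
of its coordinates in an integral basis. -/
lemma exists_discr_eq_sq_mul {K : Type*} [Field K] [NumberField K]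
    (hdeg : Module.finrank ℚ K = 4) (b : Fin 4 → 𝓞 K) :
    ∃ m : ℤ, Algebra.discr ℚ (fun i => (b i : K)) = (m : ℚ) ^ 2 * (discr K : ℚ) := by
  have hcard : Fintype.card (Module.Free.ChooseBasisIndex ℤ (𝓞 K)) = Fintype.card (Fin 4) := by
    rw [← Module.finrank_eq_card_basis (integralBasis K), hdeg, Fintype.card_fin]
  let e := Fintype.equivOfCardEq hcard
  let B := (integralBasis K).reindex e
  let P : Matrix (Fin 4) (Fin 4) ℤ :=
    Matrix.of fun i j => (RingOfIntegers.basis K).repr (b j) (e.symm i)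
  have hP : B.toMatrix (fun i => (b i : K)) = P.map (Int.castRingHom ℚ) := by
    ext i j
    simp only [B, Module.Basis.toMatrix_apply, Module.Basis.repr_reindex_apply, Matrix.map_apply, P,
      Matrix.of_apply]
    exact integralBasis_repr_apply K (b j) (e.symm i)
  refine ⟨P.det, ?_⟩
  have hB : Algebra.discr ℚ B = (discr K : ℚ) := by
    rw [coe_discr, Module.Basis.coe_reindex, Algebra.discr_reindex]
  have := Algebra.discr_of_matrix_vecMul (A := ℚ) (⇑B) (B.toMatrix (fun i => (b i : K)))
  rw [Module.Basis.toMatrix_map_vecMul, hB, hP] at this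
  rw [this, ← RingHom.mapMatrix_apply, ← RingHom.map_det]
  rfl

/-- If `β` generates `K` and has real conjugates `xᵢ`, then `disc K` is at most the discriminant
`det V(x)²` of the minimal polynomial of `β`. -/
lemma discr_le_vandermonde_sq {K : Type*} [Field K] [NumberField K]
    (hdeg : Module.finrank ℚ K = 4) (β : 𝓞 K)
    (hgen : IntermediateField.adjoin ℚ {(β : K)} = ⊤)
    (e : Fin 4 ≃ (K →ₐ[ℚ] ℂ)) (x : Fin 4 → ℝ) (hx : ∀ i, (x i : ℂ) = e i (β : K)) :
    (discr K : ℝ) ≤ (Matrix.vandermonde x).det ^ 2 := by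
  obtain ⟨m, hm⟩ := exists_discr_eq_sq_mul hdeg (fun i : Fin 4 => β ^ (i : ℕ))
  have hdisc := Algebra.discr_eq_det_embeddingsMatrixReindex_pow_two ℚ ℂ
    (fun i : Fin 4 => ((β ^ (i : ℕ) : 𝓞 K) : K)) e
  have hmat : Algebra.embeddingsMatrixReindex ℚ ℂ (fun i : Fin 4 => ((β ^ (i : ℕ) : 𝓞 K) : K)) e
      = (Complex.ofRealHom.mapMatrix (Matrix.vandermonde x)).transpose := by
    ext i j
    simp [Algebra.embeddingsMatrixReindex, Matrix.vandermonde_apply, hx]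
  rw [hmat, Matrix.det_transpose, ← RingHom.map_det, hm] at hdisc
  have key : (m : ℝ) ^ 2 * (discr K : ℝ) = (Matrix.vandermonde x).det ^ 2 := by
    apply Complex.ofReal_injective
    push_cast
    simpa using hdisc
  have hinj : Function.Injective x := by
    intro i j hij
    apply e.injective
    have h : e i (β : K) = e j (β : K) := by rw [← hx, ← hx, hij]
    exact (Field.primitive_element_iff_algHom_eq_of_eval' ℚ ℂ
      (fun y => IsAlgClosed.splits _) (β : K)).1 hgen h
  have hV : (Matrix.vandermonde x).det ≠ 0 := Matrix.det_vandermonde_ne_zero_iff.2 hinj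
  have hm0 : m ≠ 0 := by
    rintro rfl
    apply hV
    simpa using key.symm
  have hm1 : (1 : ℝ) ≤ (m : ℝ) ^ 2 := by
    exact_mod_cast Int.one_le_abs hm0 |> (one_le_sq_iff_one_le_abs m).2
  rw [← key]
  rcases le_total (discr K : ℝ) 0 with h | h
  · have hpos : 0 ≤ (m : ℝ) ^ 2 * (discr K : ℝ) := by rw [key]; positivity
    linarith
  · exact le_mul_of_one_le_left h hm1

/-- Discriminant bound for a totally real quartic field `K = ℚ(β)` in terms of the
house of `β`: `disc K ≤ (2¹²/5⁵)·⌈β⌉¹²`, where `⌈β⌉` is the maximum of `|σ(β)|` over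
the real embeddings `σ` of `K`. -/
theorem discr_le_house_pow_twelve
    (K : Type*) [Field K] [NumberField K]
    (hTR : ∀ φ : K →+* ℂ, ∀ x : K, (φ x).im = 0)
    (hdeg : Module.finrank ℚ K = 4)
    (β : 𝓞 K) (hgen : IntermediateField.adjoin ℚ {(β : K)} = ⊤) :
    (NumberField.discr K : ℝ) ≤
      (2 ^ 12 / 5 ^ 5) * (⨆ σ : K →+* ℝ, |σ (β : K)|) ^ 12 := by
  have hcard : Fintype.card (Fin 4) = Fintype.card (K →ₐ[ℚ] ℂ) := by
    rw [AlgHom.card, hdeg, Fintype.card_fin]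
  let e := Fintype.equivOfCardEq hcard
  have hreal : ∀ i, ComplexEmbedding.IsReal (e i : K →+* ℂ) := fun i =>
    RingHom.ext fun y => Complex.conj_eq_iff_im.2 (hTR (e i : K →+* ℂ) y)
  -- The supremum is over a finite set, since composing with `ℝ → ℂ` embeds it in `K →+* ℂ`.
  have hfin : Finite (K →+* ℝ) :=
    Finite.of_injective (fun σ : K →+* ℝ => Complex.ofRealHom.comp σ) fun σ τ h =>
      RingHom.ext fun y => Complex.ofReal_injective (RingHom.congr_fun h y)
  refine (discr_le_vandermonde_sq hdeg β hgen e (fun i => (hreal i).embedding (β : K))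
    (fun i => (hreal i).coe_embedding_apply _)).trans (vandermonde_sq_le _ _ fun i => ?_)
  exact le_ciSup (f := fun σ : K →+* ℝ => |σ (β : K)|) (Set.finite_range _).bddAbove
    (hreal i).embedding
end
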